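/- If ζ is a primitive root of unity of odd order 2k+1, then as q approaches ζ radially within the unit disk, lim_{q→ζ} ( ψ(q) − (q²,−q,−q;q²)_∞/(2(−q²,q;q²)_∞) ) = −Σ_{n=0}^{k} (1−ζ)(1−ζ³)···(1−ζ^{2n−1}) (−1)^n. -/

import Mathlib

open scoped BigOperators
open Filter

/-- finite q-Pochhammer symbol (a;q)_n -/
noncomputable def qP (a q : ℂ) (n : ℕ) : ℂ := ∏ i ∈ Finset.range n, (1 - a * q ^ i)

/-- q-Pochhammer symbol extended to integer index: (a;q)_{-n} = 1/(a q^{-n};q)_n -/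
noncomputable def qPZ (a q : ℂ) : ℤ → ℂ
  | Int.ofNat n => qP a q n
  | Int.negSucc n => 1 / qP (a * q ^ (-(n + 1 : ℤ))) q (n + 1)

/-- infinite q-Pochhammer symbol (a;q)_∞ -/
noncomputable def qPInf (a q : ℂ) : ℂ := ∏' n : ℕ, (1 - a * q ^ n)

/-- Ramanujan's third order mock theta function ψ -/
noncomputable def psi3 (q : ℂ) : ℂ := ∑' n : ℕ, q ^ ((n + 1) ^ 2) / qP q (q ^ 2) (n + 1)

/-!
Write `S(x, b) = ∑ x ^ n Q ^ (n (n - 1) / 2) / (b; Q)_n`, so that the third order mock theta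
function `φ(q) = ∑ q ^ (n ^ 2) / (-q ^ 2; q ^ 2)_n` is `S(q, -q ^ 2)` with `Q = q ^ 2`, and let
`F(a; x) = ∑ (a; Q)_n x ^ n`. Iterating the functional equation that relates `F(a; x)` to
`F(a; x Q)` gives Fine's identity `(1 - x) F(a; x) = S(-a x, x Q)`, for `|Q| = 1` as well as for
`|Q| < 1`.

Inside the disc, the bilateral extension `B(b)` of `S(x, b)` satisfies
`B(b Q) = (1 - b) (1 + b / x) B(b)`, hence `B(0) = (b; Q)_∞ (-b / x; Q)_∞ B(b)`. The case `b = Q`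
is Jacobi's triple product identity, by Euler's `S(x, Q) = (-x; Q)_∞`. For `x = q`, `Q = q ^ 2`
and `b = -q ^ 2`, Fine's identity turns `B(b)` into `φ(q) + 2 ψ(q)`, so that `ψ(q)` minus the
quotient of products equals `-φ(q) / 2`.

For `ζ` of odd order `N` and `q = t ζ`, the ratio of the terms of index `n + N` and `n` of `φ(q)`
is a continuous function of `q` and `y = q ^ (2 n)` with `y ^ N ∈ [0, 1]`, equal to
`y ^ N / (1 + y ^ N)` at `q = ζ`. By compactness it stays below `2 / 3` for `t` close to `1`, so
dominated convergence gives `φ(t ζ) → φ(ζ)`. Fine's identity with `a = ζ`, `x = -1`, where the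
left side terminates, evaluates `φ(ζ)` as twice the alternating sum.
-/

open Finset Topology

section RatioTests

theorem summable_prod_range {F : Type*} [NormedField F] [CompleteSpace F] {u : ℕ → F} {l : F}
    (hu : Tendsto u atTop (𝓝 l)) (hl : ‖l‖ < 1) : Summable fun n => ∏ i ∈ range n, u i := by
  obtain ⟨r, hlr, hr⟩ := exists_between hl
  refine summable_of_ratio_norm_eventually_le hr ?_
  filter_upwards [hu.norm.eventually_le_const hlr] with n hn
  rw [prod_range_succ, norm_mul, mul_comm]
  gcongr

theorem tendsto_tsum_prod_range {α F : Type*} [NormedField F] [CompleteSpace F] {l : Filter α}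
    {u : α → ℕ → F} {w : ℕ → F} {v : ℕ → ℝ} {r : ℝ} (hv : Tendsto v atTop (𝓝 r)) (hr : ‖r‖ < 1)
    (huv : ∀ᶠ a in l, ∀ i, ‖u a i‖ ≤ v i) (huw : ∀ i, Tendsto (u · i) l (𝓝 (w i))) :
    Tendsto (fun a => ∑' n, ∏ i ∈ range n, u a i) l (𝓝 (∑' n, ∏ i ∈ range n, w i)) := by
  refine tendsto_tsum_of_dominated_convergence (summable_prod_range hv hr)
    (fun n => tendsto_finsetProd _ fun i _ => huw i) ?_
  filter_upwards [huv] with a ha n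
  rw [norm_prod]
  exact prod_le_prod (fun i _ => norm_nonneg _) fun i _ => ha i

theorem summable_pow_div {r : ℝ} {N : ℕ} (hr0 : 0 ≤ r) (hr1 : r < 1) (hN : N ≠ 0) :
    Summable fun n : ℕ => r ^ (n / N) := by
  have : NeZero N := ⟨hN⟩
  rw [← (Nat.divModEquiv N).symm.summable_iff]
  have h := (summable_geometric_of_lt_one hr0 hr1).mul_of_nonneg
    (Summable.of_finite (f := fun _ : Fin N => (1 : ℝ))) (fun n => by positivity)
    fun _ => zero_le_one
  refine h.congr fun p => ?_
  have hdiv : (Nat.divModEquiv N).symm p / N = p.1 :=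
    congrArg Prod.fst ((Nat.divModEquiv N).apply_symm_apply p)
  rw [mul_one, Function.comp_apply, hdiv]

theorem le_mul_pow_div {u : ℕ → ℝ} {r C : ℝ} {N : ℕ} (hr : 0 ≤ r) (hN : N ≠ 0)
    (hC : ∀ n < N, u n ≤ C) (hu : ∀ n, u (n + N) ≤ r * u n) (n : ℕ) : u n ≤ C * r ^ (n / N) := by
  induction n using Nat.strong_induction_on with
  | _ n ih =>
    rcases lt_or_ge n N with hn | hn
    · simpa [Nat.div_eq_of_lt hn] using hC n hn
    · obtain ⟨m, rfl⟩ := Nat.exists_eq_add_of_le' hn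
      calc u (m + N) ≤ r * u m := hu m
        _ ≤ r * (C * r ^ (m / N)) := by gcongr; exact ih m (by omega)
        _ = C * r ^ ((m + N) / N) := by
          rw [Nat.add_div_right m (Nat.pos_of_ne_zero hN), pow_succ]; ring

variable {E : Type*} [NormedAddCommGroup E] [CompleteSpace E]

theorem tendsto_tsum_of_norm_add_le {α : Type*} {l : Filter α} {f : α → ℕ → E} {g : ℕ → E}
    {r : ℝ} {N : ℕ} (hr0 : 0 ≤ r) (hr1 : r < 1) (hN : N ≠ 0)
    (hf : ∀ᶠ a in l, ∀ n, ‖f a (n + N)‖ ≤ r * ‖f a n‖)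
    (hfg : ∀ n, Tendsto (f · n) l (𝓝 (g n))) :
    Tendsto (fun a => ∑' n, f a n) l (𝓝 (∑' n, g n)) := by
  set C := ∑ n ∈ range N, (‖g n‖ + 1)
  have hfC : ∀ᶠ a in l, ∀ n ∈ range N, ‖f a n‖ ≤ C := by
    refine (eventually_all_finset _).2 fun n hn => ?_
    filter_upwards [(hfg n).norm.eventually_le_const (lt_add_one _)] with a ha
    exact ha.trans (single_le_sum (f := fun n => ‖g n‖ + 1) (fun i _ => by positivity) hn)
  refine tendsto_tsum_of_dominated_convergence ((summable_pow_div hr0 hr1 hN).mul_left C) hfg ?_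
  filter_upwards [hf, hfC] with a ha haC
  exact le_mul_pow_div hr0 hN (fun n hn => haC n (mem_range.2 hn)) ha

theorem summable_of_norm_add_le {f : ℕ → E} {r : ℝ} {N : ℕ} (hr0 : 0 ≤ r) (hr1 : r < 1)
    (hN : N ≠ 0) (hf : ∀ n, ‖f (n + N)‖ ≤ r * ‖f n‖) : Summable f :=
  .of_norm_bounded ((summable_pow_div hr0 hr1 hN).mul_left (∑ n ∈ range N, ‖f n‖))
    (le_mul_pow_div hr0 hN
      (fun _ hn => single_le_sum (f := fun n => ‖f n‖) (fun _ _ => norm_nonneg _)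
        (mem_range.2 hn)) hf)

end RatioTests

section Pochhammer

theorem norm_mul_pow_le (a : ℂ) {q : ℂ} (hq : ‖q‖ ≤ 1) (n : ℕ) : ‖a * q ^ n‖ ≤ ‖a‖ := by
  rw [norm_mul, norm_pow]
  exact mul_le_of_le_one_right (norm_nonneg _) (pow_le_one₀ (norm_nonneg _) hq)

theorem mul_pow_ne_one_of_norm_lt {a q : ℂ} (ha : ‖a‖ < 1) (hq : ‖q‖ ≤ 1) (n : ℕ) :
    a * q ^ n ≠ 1 := by
  refine ne_of_apply_ne norm (ne_of_lt ?_)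
  rw [norm_one]
  exact (norm_mul_pow_le a hq n).trans_lt ha

theorem mul_pow_ne_one_of_pow_ne_one {M : Type*} [CommMonoid M] {a q : M} {N : ℕ}
    (hq : q ^ N = 1) (ha : a ^ N ≠ 1) (n : ℕ) : a * q ^ n ≠ 1 := fun h =>
  ha (by simpa [mul_pow, pow_right_comm q n N, hq] using congrArg (· ^ N) h)

theorem qP_succ (a q : ℂ) (n : ℕ) : qP a q (n + 1) = qP a q n * (1 - a * q ^ n) :=
  prod_range_succ _ _

theorem qP_eq_zero {a q : ℂ} {i n : ℕ} (hi : a * q ^ i = 1) (hin : i < n) : qP a q n = 0 :=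
  prod_eq_zero (mem_range.2 hin) (sub_eq_zero.2 hi.symm)

theorem qP_eq_one_sub_pow_of_isPrimitiveRoot {ω : ℂ} {N : ℕ} (hω : IsPrimitiveRoot ω N)
    (hN : 0 < N) (b : ℂ) : qP b ω N = 1 - b ^ N := by
  have h := congrArg (Polynomial.eval 1) (X_pow_sub_C_eq_prod hω hN (rfl : b ^ N = b ^ N))
  simpa [qP, Polynomial.eval_prod, mul_comm] using h.symm

variable {q : ℂ}

theorem summable_norm_neg_mul_pow (a : ℂ) (hq : ‖q‖ < 1) :
    Summable fun n : ℕ => ‖-(a * q ^ n)‖ := by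
  simpa only [norm_neg, norm_mul, norm_pow] using
    (summable_geometric_of_lt_one (norm_nonneg _) hq).mul_left ‖a‖

theorem tendsto_qP (a : ℂ) (hq : ‖q‖ < 1) : Tendsto (qP a q) atTop (𝓝 (qPInf a q)) := by
  simpa only [← sub_eq_add_neg] using!
    (multipliable_one_add_of_summable (summable_norm_neg_mul_pow a hq)).tendsto_prod_tprod_nat

theorem qPInf_ne_zero {a : ℂ} (hq : ‖q‖ < 1) (ha : ∀ n, a * q ^ n ≠ 1) : qPInf a q ≠ 0 := by
  simpa only [← sub_eq_add_neg] using! tprod_one_add_ne_zero_of_summable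
    (fun n => by simpa only [← sub_eq_add_neg] using sub_ne_zero.2 (ha n).symm)
    (summable_norm_neg_mul_pow a hq)

end Pochhammer

section Confluent

/-- The term `x ^ n Q ^ (n (n - 1) / 2) / (b; Q)_n` of the confluent basic hypergeometric series
`₁φ₁(Q; b; Q, -x)`, encoded as the product of its successive ratios. -/
noncomputable def confluentTerm (x b Q : ℂ) (n : ℕ) : ℂ :=
  ∏ i ∈ range n, x * Q ^ i / (1 - b * Q ^ i)

variable {x b Q : ℂ}

theorem confluentTerm_zero (x b Q : ℂ) : confluentTerm x b Q 0 = 1 := prod_range_zero _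

theorem confluentTerm_succ (x b Q : ℂ) (n : ℕ) :
    confluentTerm x b Q (n + 1) = confluentTerm x b Q n * (x * Q ^ n / (1 - b * Q ^ n)) :=
  prod_range_succ _ _

theorem confluentTerm_add (x b Q : ℂ) (m n : ℕ) :
    confluentTerm x b Q (m + n) =
      confluentTerm x b Q m * confluentTerm (x * Q ^ m) (b * Q ^ m) Q n := by
  simp only [confluentTerm, prod_range_add, pow_add, mul_assoc]

theorem confluentTerm_mul_sq (q y b : ℂ) (n : ℕ) :
    confluentTerm (q * y) b (q ^ 2) n = y ^ n * q ^ n ^ 2 / qP b (q ^ 2) n := by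
  have hnum : ∏ i ∈ range n, q * y * (q ^ 2) ^ i = y ^ n * q ^ n ^ 2 := by
    induction n with
    | zero => simp
    | succ n ih => rw [prod_range_succ, ih]; ring
  rw [confluentTerm, prod_div_distrib, hnum, qP]

theorem confluentTerm_sq (q b : ℂ) (n : ℕ) :
    confluentTerm q b (q ^ 2) n = q ^ n ^ 2 / qP b (q ^ 2) n := by
  simpa using confluentTerm_mul_sq q 1 b n

theorem tendsto_confluentTerm {α : Type*} {l : Filter α} {f g h : α → ℂ}
    (hf : Tendsto f l (𝓝 x)) (hg : Tendsto g l (𝓝 b)) (hh : Tendsto h l (𝓝 Q))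
    (hb : ∀ i, b * Q ^ i ≠ 1) (n : ℕ) :
    Tendsto (fun a => confluentTerm (f a) (g a) (h a) n) l (𝓝 (confluentTerm x b Q n)) :=
  tendsto_finsetProd _ fun i _ => (hf.mul (hh.pow i)).div
    ((hg.mul (hh.pow i)).const_sub 1) (sub_ne_zero.2 (hb i).symm)

theorem summable_confluentTerm (x b : ℂ) (hQ : ‖Q‖ < 1) : Summable (confluentTerm x b Q) := by
  have hpow := tendsto_pow_atTop_nhds_zero_of_norm_lt_one hQ
  refine summable_prod_range (l := 0) ?_ (by simp)
  simpa only [mul_zero, sub_zero, zero_div] using!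
    (hpow.const_mul x).div ((hpow.const_mul b).const_sub 1) (by simp)

theorem tsum_confluentTerm (h : Summable (confluentTerm x b Q)) :
    ∑' n, confluentTerm x b Q n =
      1 + x / (1 - b) * ∑' n, confluentTerm (x * Q) (b * Q) Q n := by
  rw [h.tsum_eq_zero_add, confluentTerm_zero, ← tsum_mul_left]
  congr! 3 with n
  rw [add_comm n 1, confluentTerm_add]
  simp [confluentTerm]

end Confluent

section Fine

/-- Fine's series `∑ (a; Q)_n x ^ n`. -/
noncomputable def fineSeries (a Q x : ℂ) : ℂ := ∑' n, qP a Q n * x ^ n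

variable {a Q x : ℂ}

theorem summable_fineSeries (a : ℂ) (hQ : ‖Q‖ < 1) (hx : ‖x‖ < 1) :
    Summable fun n => qP a Q n * x ^ n := by
  have hlim : Tendsto (fun i : ℕ => (1 - a * Q ^ i) * x) atTop (𝓝 x) := by
    have hpow := tendsto_pow_atTop_nhds_zero_of_norm_lt_one hQ
    simpa using ((hpow.const_mul a).const_sub 1).mul_const x
  simpa [qP, prod_mul_distrib] using summable_prod_range hlim hx

theorem norm_qP_mul_pow_mul_pow_le (hQ : ‖Q‖ ≤ 1) (m n : ℕ) :
    ‖qP a Q n * (x * Q ^ m) ^ n‖ ≤ ‖qP a Q n * x ^ n‖ := by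
  rw [mul_pow, ← mul_assoc, ← pow_mul]
  exact norm_mul_pow_le _ hQ _

theorem one_sub_mul_fineSeries_eq_one_sub (hx : Summable fun n => qP a Q n * x ^ n)
    (hxQ : Summable fun n => qP a Q n * (x * Q) ^ n) :
    (1 - x) * fineSeries a Q x = 1 - a * x * fineSeries a Q (x * Q) := by
  have hterm (n : ℕ) : qP a Q (n + 1) * x ^ (n + 1) =
      x * (qP a Q n * x ^ n) - a * x * (qP a Q n * (x * Q) ^ n) := by
    rw [qP_succ]; ring
  have hsum : fineSeries a Q x = 1 + (x * fineSeries a Q x - a * x * fineSeries a Q (x * Q)) := by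
    conv_lhs => rw [fineSeries, hx.tsum_eq_zero_add, tsum_congr hterm,
      (hx.mul_left x).tsum_sub (hxQ.mul_left _), tsum_mul_left, tsum_mul_left]
    simp [fineSeries, qP]
  linear_combination hsum

theorem one_sub_mul_fineSeries_eq_sum_add (hQ : ‖Q‖ ≤ 1)
    (hF : Summable fun n => qP a Q n * x ^ n) (hx : ∀ m, x * Q * Q ^ m ≠ 1) (M : ℕ) :
    (1 - x) * fineSeries a Q x =
      ∑ m ∈ range M, confluentTerm (-(a * x)) (x * Q) Q m +
        confluentTerm (-(a * x)) (x * Q) Q M * ((1 - x * Q ^ M) * fineSeries a Q (x * Q ^ M)) := by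
  have hs (m : ℕ) : Summable fun n => qP a Q n * (x * Q ^ m) ^ n :=
    .of_norm_bounded hF.norm (norm_qP_mul_pow_mul_pow_le hQ m)
  induction M with
  | zero => simp [confluentTerm_zero]
  | succ M ih =>
    have hstep := one_sub_mul_fineSeries_eq_one_sub (hs M)
      (by simpa only [pow_succ, mul_assoc] using hs (M + 1))
    have hne : 1 - x * Q * Q ^ M ≠ 0 := sub_ne_zero.2 (hx M).symm
    rw [ih, hstep, sum_range_succ, confluentTerm_succ, pow_succ', ← mul_assoc x Q,
      mul_right_comm x (Q ^ M)]
    generalize x * Q * Q ^ M = y at hne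
    field_simp
    ring

theorem one_sub_mul_fineSeries (hQ : ‖Q‖ ≤ 1) (hF : Summable fun n => qP a Q n * x ^ n)
    (hx : ∀ m, x * Q * Q ^ m ≠ 1) (hT : Summable (confluentTerm (-(a * x)) (x * Q) Q)) :
    (1 - x) * fineSeries a Q x = ∑' n, confluentTerm (-(a * x)) (x * Q) Q n := by
  have hbound (m : ℕ) : ‖(1 - x * Q ^ m) * fineSeries a Q (x * Q ^ m)‖ ≤
      (1 + ‖x‖) * ∑' n, ‖qP a Q n * x ^ n‖ := by
    rw [norm_mul]
    gcongr
    · refine (norm_sub_le _ _).trans ?_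
      rw [norm_one]
      gcongr
      exact norm_mul_pow_le x hQ m
    · exact tsum_of_norm_bounded hF.norm.hasSum (norm_qP_mul_pow_mul_pow_le hQ m)
  have hrem : Tendsto (fun m => confluentTerm (-(a * x)) (x * Q) Q m *
      ((1 - x * Q ^ m) * fineSeries a Q (x * Q ^ m))) atTop (𝓝 0) :=
    hT.tendsto_atTop_zero.zero_mul_isBoundedUnder_le (isBoundedUnder_of ⟨_, hbound⟩)
  refine tendsto_nhds_unique (tendsto_const_nhds (f := (atTop : Filter ℕ))) ?_
  simpa only [← one_sub_mul_fineSeries_eq_sum_add hQ hF hx, add_zero] using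
    hT.hasSum.tendsto_sum_nat.add hrem

theorem tsum_confluentTerm_eq_one_add_fineSeries {b : ℂ} (hQ : ‖Q‖ < 1) (hb : ‖b‖ < 1)
    (hx : x * Q = -(a * b)) :
    ∑' n, confluentTerm x b Q n = 1 + x * fineSeries a Q b := by
  have hb1 : 1 - b ≠ 0 := sub_ne_zero.2 fun h => by simp [← h] at hb
  have hFine := one_sub_mul_fineSeries hQ.le (summable_fineSeries a hQ hb)
    (fun m => by simpa [pow_succ', mul_assoc] using mul_pow_ne_one_of_norm_lt hb hQ.le (m + 1))
    (summable_confluentTerm _ _ hQ)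
  rw [tsum_confluentTerm (summable_confluentTerm _ _ hQ), hx, ← hFine]
  field_simp

theorem mul_fineSeries_self (a : ℂ) (hQ : ‖Q‖ < 1) :
    a * fineSeries a Q Q = 1 - qPInf a Q := by
  have hterm (n : ℕ) : a * (qP a Q n * Q ^ n) = qP a Q n - qP a Q (n + 1) := by
    rw [qP_succ]; ring
  have hsum := ((summable_fineSeries a hQ hQ).mul_left a).hasSum.tendsto_sum_nat
  simp only [hterm, sum_range_sub'] at hsum
  rw [fineSeries, ← tsum_mul_left, tsum_congr hterm]
  refine tendsto_nhds_unique hsum ?_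
  simpa [qP] using (tendsto_qP a hQ).const_sub 1

theorem euler_tsum_confluentTerm_self (x : ℂ) (hQ : ‖Q‖ < 1) :
    ∑' n, confluentTerm x Q Q n = qPInf (-x) Q := by
  rw [tsum_confluentTerm_eq_one_add_fineSeries (a := -x) hQ hQ (by ring)]
  linear_combination -mul_fineSeries_self (-x) hQ

end Fine

section Bilateral

/-- The term of index `-n` in the continuation of `confluentTerm x b Q` to negative indices. -/
noncomputable def confluentNegTerm (x b Q : ℂ) (n : ℕ) : ℂ :=
  ∏ i ∈ range n, (Q ^ (i + 1) - b) / x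

/-- The bilateral series `∑ x ^ n Q ^ (n (n - 1) / 2) / (b; Q)_n` over all integers `n`, split into
its terms of nonnegative and of negative index. -/
noncomputable def bilateralSeries (x b Q : ℂ) : ℂ :=
  ∑' n, confluentTerm x b Q n + ∑' n, confluentNegTerm x b Q (n + 1)

variable {x b Q : ℂ}

theorem confluentNegTerm_succ (x b Q : ℂ) (n : ℕ) :
    confluentNegTerm x b Q (n + 1) = confluentNegTerm x b Q n * ((Q ^ (n + 1) - b) / x) :=
  prod_range_succ _ _

theorem confluentTerm_mul_right (hx : x ≠ 0) (hb : ∀ i, b * Q ^ i ≠ 1) (n : ℕ) :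
    confluentTerm x (b * Q) Q n =
      (1 - b) * (confluentTerm x b Q n + b / x * confluentTerm x b Q (n + 1)) := by
  have hne (i : ℕ) : 1 - b * Q ^ i ≠ 0 := sub_ne_zero.2 (hb i).symm
  have hquot : confluentTerm x (b * Q) Q n =
      (1 - b) * (confluentTerm x b Q n / (1 - b * Q ^ n)) := by
    induction n with
    | zero => simpa [confluentTerm] using (mul_inv_cancel₀ (by simpa using hne 0)).symm
    | succ n ih => rw [confluentTerm_succ, ih, confluentTerm_succ]; ring
  rw [hquot, confluentTerm_succ]
  have hn := hne n
  field_simp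
  ring

theorem confluentNegTerm_mul_right (hx : x ≠ 0) (n : ℕ) :
    confluentNegTerm x (b * Q) Q (n + 1) =
      (1 - b) * (confluentNegTerm x b Q (n + 1) + b / x * confluentNegTerm x b Q n) := by
  have hshift : confluentNegTerm x (b * Q) Q (n + 1) =
      (1 - b) * (confluentNegTerm x b Q n * (Q ^ (n + 1) / x)) := by
    induction n with
    | zero => simp only [confluentNegTerm, zero_add, prod_range_one, prod_range_zero, pow_one]; ring
    | succ n ih => rw [confluentNegTerm_succ, ih, confluentNegTerm_succ]; ring
  rw [hshift, confluentNegTerm_succ]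
  field_simp
  ring

theorem summable_confluentNegTerm (hQ : ‖Q‖ < 1) (hbx : ‖b‖ < ‖x‖) :
    Summable (confluentNegTerm x b Q) := by
  have hpow := (tendsto_pow_atTop_nhds_zero_of_norm_lt_one hQ).comp (tendsto_add_atTop_nat 1)
  refine summable_prod_range ((hpow.sub_const b).div_const x) ?_
  rw [zero_sub, norm_div, norm_neg]
  exact (div_lt_one ((norm_nonneg b).trans_lt hbx)).2 hbx

theorem bilateralSeries_mul_right (hQ : ‖Q‖ < 1) (hbx : ‖b‖ < ‖x‖) (hb : ∀ i, b * Q ^ i ≠ 1) :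
    bilateralSeries x (b * Q) Q = (1 - b) * (1 - -b / x) * bilateralSeries x b Q := by
  have hx : x ≠ 0 := norm_pos_iff.1 ((norm_nonneg b).trans_lt hbx)
  have hT := summable_confluentTerm x b hQ
  have hR := summable_confluentNegTerm hQ hbx
  have hT1 := (summable_nat_add_iff 1).2 hT
  have hR1 := (summable_nat_add_iff 1).2 hR
  have hTsum := hT.tsum_eq_zero_add
  have hRsum := hR.tsum_eq_zero_add
  rw [confluentTerm_zero] at hTsum
  rw [confluentNegTerm, prod_range_zero] at hRsum
  simp only [bilateralSeries, confluentTerm_mul_right hx hb, confluentNegTerm_mul_right hx,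
    tsum_mul_left, hT.tsum_add (hT1.mul_left _), hR1.tsum_add (hR.mul_left _)]
  linear_combination (1 - b) * (b / x) * (hRsum - hTsum)

theorem bilateralSeries_mul_pow_right (hQ : ‖Q‖ < 1) (hbx : ‖b‖ < ‖x‖)
    (hb : ∀ i, b * Q ^ i ≠ 1) (m : ℕ) :
    bilateralSeries x (b * Q ^ m) Q = qP b Q m * qP (-b / x) Q m * bilateralSeries x b Q := by
  induction m with
  | zero => simp [qP]
  | succ m ih =>
    have hnorm : ‖b * Q ^ m‖ < ‖x‖ := (norm_mul_pow_le b hQ.le m).trans_lt hbx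
    rw [pow_succ, ← mul_assoc, bilateralSeries_mul_right hQ hnorm
      fun i => by simpa only [mul_assoc, ← pow_add] using hb (m + i), ih, qP_succ, qP_succ]
    ring

theorem tendsto_tsum_confluentTerm_right (x : ℂ) (hQ : ‖Q‖ < 1) :
    Tendsto (fun b => ∑' n, confluentTerm x b Q n) (𝓝 0) (𝓝 (∑' n, confluentTerm x 0 Q n)) := by
  have hv : Tendsto (fun i : ℕ => ‖x‖ * ‖Q‖ ^ i / (1 / 2)) atTop (𝓝 0) := by
    simpa using ((tendsto_pow_atTop_nhds_zero_of_lt_one (norm_nonneg Q) hQ).const_mul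
      ‖x‖).div_const (1 / 2)
  refine tendsto_tsum_prod_range hv (by simp) ?_ fun i => ?_
  · filter_upwards [Metric.closedBall_mem_nhds (0 : ℂ) one_half_pos] with b hb i
    rw [mem_closedBall_zero_iff] at hb
    have hbQ : ‖b * Q ^ i‖ ≤ 1 / 2 := (norm_mul_pow_le b hQ.le i).trans hb
    have hden : 1 / 2 ≤ ‖1 - b * Q ^ i‖ := by
      linarith [norm_sub_norm_le 1 (b * Q ^ i), norm_one (α := ℂ)]
    rw [norm_div, norm_mul, norm_pow]
    gcongr
  · exact tendsto_const_nhds.div ((tendsto_id.mul_const _).const_sub 1) (by simp)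

theorem tendsto_tsum_confluentNegTerm_right (hx : x ≠ 0) (hQ : ‖Q‖ < 1) :
    Tendsto (fun b => ∑' n, confluentNegTerm x b Q n) (𝓝 0)
      (𝓝 (∑' n, confluentNegTerm x 0 Q n)) := by
  have hv : Tendsto (fun i : ℕ => (‖Q‖ ^ (i + 1) + ‖x‖ / 2) / ‖x‖) atTop (𝓝 (1 / 2)) := by
    have hpow := (tendsto_pow_atTop_nhds_zero_of_lt_one (norm_nonneg Q) hQ).comp
      (tendsto_add_atTop_nat 1)
    have hhalf : (0 + ‖x‖ / 2) / ‖x‖ = 1 / 2 := by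
      rw [zero_add, div_right_comm, div_self (norm_ne_zero_iff.2 hx)]
    exact hhalf ▸ (hpow.add_const (‖x‖ / 2)).div_const ‖x‖
  refine tendsto_tsum_prod_range hv (by norm_num) ?_ fun i =>
    (tendsto_id.const_sub _).div_const x
  filter_upwards [Metric.closedBall_mem_nhds (0 : ℂ) (half_pos (norm_pos_iff.2 hx))] with b hb i
  rw [mem_closedBall_zero_iff] at hb
  rw [norm_div, ← norm_pow]
  gcongr
  exact (norm_sub_le _ _).trans (by gcongr)

theorem tendsto_bilateralSeries_right (hx : x ≠ 0) (hQ : ‖Q‖ < 1) :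
    Tendsto (fun b => bilateralSeries x b Q) (𝓝 0) (𝓝 (bilateralSeries x 0 Q)) := by
  have hsplit {b : ℂ} (hb : ‖b‖ < ‖x‖) : ∑' n, confluentNegTerm x b Q (n + 1) =
      ∑' n, confluentNegTerm x b Q n - 1 := by
    rw [(summable_confluentNegTerm hQ hb).tsum_eq_zero_add, confluentNegTerm, prod_range_zero,
      add_sub_cancel_left]
  have hx0 := norm_pos_iff.2 hx
  rw [bilateralSeries, hsplit (by rwa [norm_zero])]
  refine ((tendsto_tsum_confluentTerm_right x hQ).add
    ((tendsto_tsum_confluentNegTerm_right hx hQ).sub_const 1)).congr' ?_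
  filter_upwards [Metric.ball_mem_nhds (0 : ℂ) hx0] with b hb
  rw [bilateralSeries, hsplit (mem_ball_zero_iff.1 hb)]

theorem bilateralSeries_zero_eq_mul (hQ : ‖Q‖ < 1) (hbx : ‖b‖ < ‖x‖)
    (hb : ∀ i, b * Q ^ i ≠ 1) :
    bilateralSeries x 0 Q = qPInf b Q * qPInf (-b / x) Q * bilateralSeries x b Q := by
  have hx : x ≠ 0 := norm_pos_iff.1 ((norm_nonneg b).trans_lt hbx)
  have hbQ : Tendsto (fun m : ℕ => b * Q ^ m) atTop (𝓝 0) := by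
    simpa using (tendsto_pow_atTop_nhds_zero_of_norm_lt_one hQ).const_mul b
  refine tendsto_nhds_unique ((tendsto_bilateralSeries_right hx hQ).comp hbQ) ?_
  exact (((tendsto_qP b hQ).mul (tendsto_qP _ hQ)).mul_const _).congr fun m =>
    (bilateralSeries_mul_pow_right hQ hbx hb m).symm

theorem bilateralSeries_self (x : ℂ) (hQ : ‖Q‖ < 1) : bilateralSeries x Q Q = qPInf (-x) Q := by
  have hneg (n : ℕ) : confluentNegTerm x Q Q (n + 1) = 0 :=
    prod_eq_zero (mem_range.2 n.succ_pos) (by simp)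
  simp only [bilateralSeries, hneg, tsum_zero, add_zero, euler_tsum_confluentTerm_self x hQ]

theorem jacobi_triple_product (hQ : ‖Q‖ < 1) (hQx : ‖Q‖ < ‖x‖) :
    bilateralSeries x 0 Q = qPInf Q Q * qPInf (-Q / x) Q * qPInf (-x) Q := by
  rw [bilateralSeries_zero_eq_mul hQ hQx (mul_pow_ne_one_of_norm_lt hQ hQ.le),
    bilateralSeries_self x hQ]

end Bilateral

section ThirdOrder

/-- Ramanujan's third order mock theta function `φ(q) = ∑ q ^ (n ^ 2) / (-q ^ 2; q ^ 2)_n`. -/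
noncomputable def phi3 (q : ℂ) : ℂ := ∑' n : ℕ, q ^ n ^ 2 / qP (-q ^ 2) (q ^ 2) n

variable {q : ℂ}

theorem phi3_eq_tsum_confluentTerm (q : ℂ) :
    phi3 q = ∑' n, confluentTerm q (-q ^ 2) (q ^ 2) n := by
  simp only [phi3, confluentTerm_sq]

theorem norm_sq_lt_one (hq : ‖q‖ < 1) : ‖q ^ 2‖ < 1 := by
  rw [norm_pow]
  exact pow_lt_one₀ (norm_nonneg _) hq two_ne_zero

theorem psi3_eq_mul_fineSeries (hq : ‖q‖ < 1) :
    psi3 q = q * fineSeries (-q ^ 2) (q ^ 2) q := by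
  have hsum := summable_confluentTerm q q (norm_sq_lt_one hq)
  have hFine := tsum_confluentTerm_eq_one_add_fineSeries (x := q) (a := -q ^ 2)
    (norm_sq_lt_one hq) hq (by ring)
  rw [hsum.tsum_eq_zero_add, confluentTerm_zero] at hFine
  simpa only [psi3, confluentTerm_sq, add_right_inj] using hFine

theorem confluentNegTerm_neg_sq (hq : q ≠ 0) (n : ℕ) :
    confluentNegTerm q (-q ^ 2) (q ^ 2) (n + 1) = 2 * q * (qP (-q ^ 2) (q ^ 2) n * q ^ n) := by
  induction n with
  | zero =>
    simp only [confluentNegTerm, qP, zero_add, prod_range_one, prod_range_zero, pow_zero, pow_one]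
    field_simp
    ring
  | succ n ih => rw [confluentNegTerm_succ, ih, qP_succ]; field_simp; ring

theorem bilateralSeries_neg_sq (hq0 : q ≠ 0) (hq : ‖q‖ < 1) :
    bilateralSeries q (-q ^ 2) (q ^ 2) = phi3 q + 2 * psi3 q := by
  simp only [bilateralSeries, ← phi3_eq_tsum_confluentTerm, confluentNegTerm_neg_sq hq0,
    tsum_mul_left, psi3_eq_mul_fineSeries hq, fineSeries, mul_assoc]

theorem watson_phi3_add_two_mul_psi3 (hq0 : q ≠ 0) (hq : ‖q‖ < 1) :
    qPInf (q ^ 2) (q ^ 2) * qPInf (-q) (q ^ 2) * qPInf (-q) (q ^ 2) =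
      qPInf (-q ^ 2) (q ^ 2) * qPInf q (q ^ 2) * (phi3 q + 2 * psi3 q) := by
  have hQ := norm_sq_lt_one hq
  have hlt : ‖q ^ 2‖ < ‖q‖ := by
    rw [norm_pow]
    exact pow_lt_self_of_lt_one₀ (norm_pos_iff.2 hq0) hq one_lt_two
  have hdiv : -q ^ 2 / q = -q := by field_simp
  have hneg : -(-q ^ 2) / q = q := by field_simp
  calc qPInf (q ^ 2) (q ^ 2) * qPInf (-q) (q ^ 2) * qPInf (-q) (q ^ 2)
      = bilateralSeries q 0 (q ^ 2) := by rw [jacobi_triple_product hQ hlt, hdiv]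
    _ = qPInf (-q ^ 2) (q ^ 2) * qPInf q (q ^ 2) * (phi3 q + 2 * psi3 q) := by
      rw [← bilateralSeries_neg_sq hq0 hq, bilateralSeries_zero_eq_mul hQ (by rwa [norm_neg])
        (mul_pow_ne_one_of_norm_lt (by rwa [norm_neg]) hQ.le), hneg]

theorem psi3_sub_eq_neg_phi3_div_two (hq0 : q ≠ 0) (hq : ‖q‖ < 1) :
    psi3 q - qPInf (q ^ 2) (q ^ 2) * qPInf (-q) (q ^ 2) * qPInf (-q) (q ^ 2) /
      (2 * qPInf (-q ^ 2) (q ^ 2) * qPInf q (q ^ 2)) = -(phi3 q / 2) := by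
  have hQ := norm_sq_lt_one hq
  have hA : qPInf (-q ^ 2) (q ^ 2) ≠ 0 :=
    qPInf_ne_zero hQ (mul_pow_ne_one_of_norm_lt (by rwa [norm_neg]) hQ.le)
  have hB : qPInf q (q ^ 2) ≠ 0 := qPInf_ne_zero hQ (mul_pow_ne_one_of_norm_lt hq hQ.le)
  rw [watson_phi3_add_two_mul_psi3 hq0 hq]
  field_simp
  ring

end ThirdOrder

section RadialLimit

variable {ζ : ℂ} {N : ℕ}

theorem neg_sq_mul_pow_ne_one (hζ : IsPrimitiveRoot ζ N) (hN : Odd N) {y : ℂ}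
    (hy : y ^ N ≠ -1) (n : ℕ) : -ζ ^ 2 * y * (ζ ^ 2) ^ n ≠ 1 := by
  have hζN : (ζ ^ 2) ^ N = 1 := by rw [pow_right_comm, hζ.pow_eq_one, one_pow]
  refine mul_pow_ne_one_of_pow_ne_one hζN ?_ n
  rw [mul_pow, hN.neg_pow, hζN, neg_one_mul]
  exact fun h => hy (neg_eq_iff_eq_neg.1 h)

theorem confluentTerm_of_isPrimitiveRoot (hζ : IsPrimitiveRoot ζ N) (hN : Odd N) (y : ℂ) :
    confluentTerm (ζ * y) (-ζ ^ 2 * y) (ζ ^ 2) N = y ^ N / (1 + y ^ N) := by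
  have hζ2 : IsPrimitiveRoot (ζ ^ 2) N := hζ.pow_of_coprime 2 (Nat.coprime_two_left.2 hN)
  rw [confluentTerm_mul_sq, qP_eq_one_sub_pow_of_isPrimitiveRoot hζ2 hN.pos, mul_pow, hN.neg_pow,
    hζ2.pow_eq_one, sq N, pow_mul, hζ.pow_eq_one, one_pow]
  ring

theorem norm_confluentTerm_lt_of_isPrimitiveRoot (hζ : IsPrimitiveRoot ζ N) (hN : Odd N) {y : ℂ}
    (hy : y ^ N ∈ Complex.ofReal '' Set.Icc 0 1) :
    ‖confluentTerm (ζ * y) (-ζ ^ 2 * y) (ζ ^ 2) N‖ < 2 / 3 := by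
  obtain ⟨s, ⟨hs0, hs1⟩, hs⟩ := hy
  have hcast : (1 : ℂ) + s = (1 + s : ℝ) := by push_cast; rfl
  rw [confluentTerm_of_isPrimitiveRoot hζ hN, ← hs, hcast, norm_div, Complex.norm_of_nonneg hs0,
    Complex.norm_of_nonneg (by linarith), div_lt_div_iff₀ (by linarith) three_pos]
  linarith

theorem ne_neg_one_of_mem_ofReal_image_Icc {w : ℂ} (hw : w ∈ Complex.ofReal '' Set.Icc 0 1) :
    w ≠ -1 := by
  obtain ⟨s, ⟨hs0, -⟩, rfl⟩ := hw
  exact_mod_cast (by linarith : s ≠ -1)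

theorem eventually_norm_confluentTerm_le (hζ : IsPrimitiveRoot ζ N) (hN : Odd N) :
    ∀ᶠ q in 𝓝 ζ, ∀ y : ℂ, ‖y‖ ≤ 1 → y ^ N ∈ Complex.ofReal '' Set.Icc 0 1 →
      ‖confluentTerm (q * y) (-q ^ 2 * y) (q ^ 2) N‖ ≤ 2 / 3 := by
  have hK : IsCompact (Metric.closedBall (0 : ℂ) 1 ∩
      (· ^ N) ⁻¹' (Complex.ofReal '' Set.Icc 0 1)) :=
    (isCompact_closedBall 0 1).inter_right
      ((isCompact_Icc.image Complex.continuous_ofReal).isClosed.preimage (continuous_pow N))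
  refine (hK.eventually_forall_of_forall_eventually (x₀ := ζ)
    (P := fun q y => ‖confluentTerm (q * y) (-q ^ 2 * y) (q ^ 2) N‖ ≤ 2 / 3)
    fun y hy => ?_).mono fun q hq y hy1 hyN => hq y ⟨mem_closedBall_zero_iff.2 hy1, hyN⟩
  have hfst : Tendsto (Prod.fst : ℂ × ℂ → ℂ) (𝓝 (ζ, y)) (𝓝 ζ) := continuous_fst.tendsto _
  have hsnd : Tendsto (Prod.snd : ℂ × ℂ → ℂ) (𝓝 (ζ, y)) (𝓝 y) := continuous_snd.tendsto _
  exact (tendsto_confluentTerm (hfst.mul hsnd) ((hfst.pow 2).neg.mul hsnd) (hfst.pow 2)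
    (neg_sq_mul_pow_ne_one hζ hN (ne_neg_one_of_mem_ofReal_image_Icc hy.2)) N).norm
    |>.eventually_le_const (norm_confluentTerm_lt_of_isPrimitiveRoot hζ hN hy.2)

theorem tendsto_ofReal_mul_nhdsWithin_one (ζ : ℂ) (s : Set ℝ) :
    Tendsto (fun t : ℝ => (t : ℂ) * ζ) (𝓝[s] 1) (𝓝 ζ) :=
  ((Complex.continuous_ofReal.mul_const ζ).tendsto' 1 ζ (by simp)).mono_left nhdsWithin_le_nhds

theorem eventually_norm_confluentTerm_add_le (hζ : IsPrimitiveRoot ζ N) (hN : Odd N) :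
    ∀ᶠ t : ℝ in 𝓝[Set.Icc 0 1] 1, ∀ n,
      ‖confluentTerm (t * ζ) (-(t * ζ) ^ 2) ((t * ζ) ^ 2) (n + N)‖ ≤
        2 / 3 * ‖confluentTerm (t * ζ) (-(t * ζ) ^ 2) ((t * ζ) ^ 2) n‖ := by
  filter_upwards [(tendsto_ofReal_mul_nhdsWithin_one ζ _).eventually
    (eventually_norm_confluentTerm_le hζ hN), self_mem_nhdsWithin] with t ht ⟨ht0, ht1⟩ n
  rw [confluentTerm_add, norm_mul, mul_comm (2 / 3)]
  refine mul_le_mul_of_nonneg_left (ht _ ?_ ⟨((t ^ 2) ^ n) ^ N, ⟨by positivity, ?_⟩, ?_⟩)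
    (norm_nonneg _)
  · rw [norm_pow, norm_pow, norm_mul, hζ.norm'_eq_one hN.pos.ne', mul_one,
      Complex.norm_of_nonneg ht0]
    exact pow_le_one₀ (by positivity) (pow_le_one₀ ht0 ht1)
  · exact pow_le_one₀ (by positivity) (pow_le_one₀ (by positivity) (pow_le_one₀ ht0 ht1))
  · have hζN : ((ζ ^ 2) ^ n) ^ N = 1 := by
      rw [pow_right_comm, pow_right_comm ζ 2 N, hζ.pow_eq_one, one_pow, one_pow]
    rw [mul_pow, mul_pow, mul_pow, hζN]
    push_cast
    ring

theorem tendsto_phi3_radial (hζ : IsPrimitiveRoot ζ N) (hN : Odd N) :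
    Tendsto (fun t : ℝ => phi3 (t * ζ)) (𝓝[Set.Icc 0 1] 1) (𝓝 (phi3 ζ)) := by
  have hray := tendsto_ofReal_mul_nhdsWithin_one ζ (Set.Icc 0 1)
  simp only [phi3_eq_tsum_confluentTerm]
  refine tendsto_tsum_of_norm_add_le (by norm_num) (by norm_num) hN.pos.ne'
    (eventually_norm_confluentTerm_add_le hζ hN) fun n =>
      tendsto_confluentTerm hray (hray.pow 2).neg (hray.pow 2) (fun i => ?_) n
  simpa using neg_sq_mul_pow_ne_one hζ hN (y := 1) (by norm_num) i

theorem summable_confluentTerm_of_isPrimitiveRoot (hζ : IsPrimitiveRoot ζ N) (hN : Odd N) :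
    Summable (confluentTerm ζ (-ζ ^ 2) (ζ ^ 2)) :=
  summable_of_norm_add_le (r := 2 / 3) (by norm_num) (by norm_num) hN.pos.ne' <| by
    simpa using (eventually_norm_confluentTerm_add_le hζ hN).self_of_nhdsWithin
      (Set.right_mem_Icc.2 zero_le_one)

theorem phi3_of_isPrimitiveRoot {k : ℕ} (hζ : IsPrimitiveRoot ζ (2 * k + 1)) :
    phi3 ζ = 2 * ∑ n ∈ range (k + 1), qP ζ (ζ ^ 2) n * (-1) ^ n := by
  have hN : Odd (2 * k + 1) := odd_two_mul_add_one k
  have hzero (n : ℕ) (hn : n ∉ range (k + 1)) : qP ζ (ζ ^ 2) n * (-1) ^ n = 0 := by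
    rw [qP_eq_zero (i := k) (by rw [← pow_mul, ← pow_succ', hζ.pow_eq_one])
      (by simpa using hn), zero_mul]
  have hnorm : ‖ζ ^ 2‖ ≤ 1 := by rw [norm_pow, hζ.norm'_eq_one hN.pos.ne', one_pow]
  have hFine := one_sub_mul_fineSeries hnorm (summable_of_ne_finset_zero hzero)
    (fun m => by simpa using neg_sq_mul_pow_ne_one hζ hN (y := 1) (by norm_num) m)
    (by simpa using summable_confluentTerm_of_isPrimitiveRoot hζ hN)
  have htwo : (1 : ℂ) - -1 = 2 := by norm_num
  rw [fineSeries, tsum_eq_sum hzero, htwo, mul_neg_one, neg_neg, neg_one_mul] at hFine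
  rw [phi3_eq_tsum_confluentTerm, hFine]

end RadialLimit

theorem stmt3 (k : ℕ) (ζ : ℂ) (hζ : IsPrimitiveRoot ζ (2 * k + 1)) :
    Tendsto (fun t : ℝ =>
        psi3 ((t : ℂ) * ζ) -
          qPInf (((t : ℂ) * ζ) ^ 2) (((t : ℂ) * ζ) ^ 2) *
            qPInf (-((t : ℂ) * ζ)) (((t : ℂ) * ζ) ^ 2) *
            qPInf (-((t : ℂ) * ζ)) (((t : ℂ) * ζ) ^ 2) /
          (2 * qPInf (-((t : ℂ) * ζ) ^ 2) (((t : ℂ) * ζ) ^ 2) *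
            qPInf ((t : ℂ) * ζ) (((t : ℂ) * ζ) ^ 2)))
      (nhdsWithin 1 (Set.Ioo (0 : ℝ) 1))
      (nhds (-∑ n ∈ Finset.range (k + 1),
          (∏ j ∈ Finset.range n, (1 - ζ ^ (2 * j + 1))) * (-1) ^ n)) := by
  have hlim : -∑ n ∈ range (k + 1), (∏ j ∈ range n, (1 - ζ ^ (2 * j + 1))) * (-1) ^ n =
      -(phi3 ζ / 2) := by
    rw [phi3_of_isPrimitiveRoot hζ, mul_div_cancel_left₀ _ two_ne_zero]
    simp only [qP, ← pow_mul, ← pow_succ']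
  have hφ := ((tendsto_phi3_radial hζ (odd_two_mul_add_one k)).mono_left
    (nhdsWithin_mono 1 Set.Ioo_subset_Icc_self)).div_const 2
  rw [hlim]
  refine hφ.neg.congr' ?_
  filter_upwards [self_mem_nhdsWithin] with t ⟨ht0, ht1⟩
  have hζ1 : ‖ζ‖ = 1 := hζ.norm'_eq_one (2 * k).succ_ne_zero
  have hq0 : (t : ℂ) * ζ ≠ 0 :=
    mul_ne_zero (Complex.ofReal_ne_zero.2 ht0.ne') (norm_ne_zero_iff.1 (hζ1 ▸ one_ne_zero))
  have hq1 : ‖(t : ℂ) * ζ‖ < 1 := by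
    rwa [norm_mul, hζ1, mul_one, Complex.norm_of_nonneg ht0.le]
  exact (psi3_sub_eq_neg_phi3_div_two hq0 hq1).symm
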